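/- Let N ≥ 3, 0 < m < (N-2)/N, k > 0, and let B = B_k be the Barenblatt solution with extinction time T. Let u be a solution of the fast diffusion equation on ℝ^N × (0,T*) with T* > T, continuous up to t = 0, whose initial value satisfies u(·,0) - B(·,0) = f with f ∈ L¹(ℝ^N) nonnegative and radially symmetric. Assume: u(·,t) is radially symmetric for each t; u(x,t) ≥ B(x,t) on ℝ^N × (0,T); ∫_{ℝ^N}|u(x,t) - B(x,t)|dx ≤ ‖f‖_{L¹} for t ∈ (0,T); and u satisfies the Aronson–Bénilan inequality ∂ₜu ≤ u/((1-m)t). Then there is no constant A > 0 and sequence |xᵢ| → ∞ with u(xᵢ,T) ≥ A/|xᵢ|^{2/(1-m)}; that is, |x|^{2/(1-m)} u(x,T) → 0 as |x| → ∞. -/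

import Mathlib

/-!
Everything takes place at the time slice `t = T`. As `t ↑ T` the Barenblatt solution tends to zero
away from the origin, so Fatou's lemma and the `L¹` bound on `u - B` make `v = u(·, T)` integrable.
The equation together with the Aronson–Bénilan inequality gives `Δ (v ^ m) ≤ C v` with
`C = 1 / ((1 - m) T)`.

For the radial profile `V` of `v` this reads `(r ^ (N-1) (V ^ m)')' ≤ C r ^ (N-1) V`
(`lapl_radial`), and since `v` has finite mass, integration from the origin gives
`(V ^ m)' ≤ K r ^ (1-N)` (`flux_le`). Thus `V ^ m` grows by at most `K' R ^ (2-N)` over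
`[R/2, R]`. Put `q = 2/(1-m)`. The condition `m < (N-2)/N` says exactly that `q m < N - 2`, and
also that `q < N`. If `V R ≥ ε R ^ (-q)` with `R` large, then the growth is negligible against
`V(R) ^ m ≥ ε ^ m R ^ (-q m)`, so `V ≥ c R ^ (-q)` on the whole annulus, whose mass is then at
least a multiple of `R ^ (N-q)`; for large `R` this exceeds the total mass (`tendsto_profile`).
-/

open MeasureTheory Real Filter Topology RealInnerProductSpace

noncomputable section

abbrev Euc (N : ℕ) := EuclideanSpace ℝ (Fin N)

/-- Laplacian: trace of the second derivative. -/
def lapl {N : ℕ} (f : Euc N → ℝ) (x : Euc N) : ℝ :=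
  ∑ i : Fin N, iteratedFDeriv ℝ 2 f x ![EuclideanSpace.single i 1, EuclideanSpace.single i 1]

/-- The constant C* = 2m(N-2-mN)/(1-m). -/
def Cst (N : ℕ) (m : ℝ) : ℝ := 2 * m * ((N : ℝ) - 2 - m * N) / (1 - m)

/-- β = N/(N-2-Nm). -/
def betaC (N : ℕ) (m : ℝ) : ℝ := (N : ℝ) / ((N : ℝ) - 2 - N * m)

/-- γ = -β/N. -/
def gammaC (N : ℕ) (m : ℝ) : ℝ := -betaC N m / N

/-- Barenblatt solution with extinction time T. -/
def Bb (N : ℕ) (m T k : ℝ) (x : Euc N) (t : ℝ) : ℝ :=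
  (Cst N m * (T - t) / (k * (T - t) ^ (2 * gammaC N m) + ‖x‖ ^ 2)) ^ (1 / (1 - m))

/-- Rescaled Barenblatt profile. -/
def BbTil (N : ℕ) (m k : ℝ) (x : Euc N) : ℝ :=
  (Cst N m / (k + ‖x‖ ^ 2)) ^ (1 / (1 - m))

/-- u is a solution of the fast diffusion equation on ℝ^N × (0,T) with initial value u₀. -/
def IsFDESol (N : ℕ) (m T : ℝ) (u : Euc N → ℝ → ℝ) (u₀ : Euc N → ℝ) : Prop :=
  (∀ x : Euc N, ∀ t ∈ Set.Ioo (0:ℝ) T, 0 < u x t) ∧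
  ContDiffOn ℝ (⊤ : ℕ∞) (fun p : Euc N × ℝ => u p.1 p.2) (Set.univ ×ˢ Set.Ioo (0:ℝ) T) ∧
  ContinuousOn (fun p : Euc N × ℝ => u p.1 p.2) (Set.univ ×ˢ Set.Ico (0:ℝ) T) ∧
  (∀ x, u x 0 = u₀ x) ∧
  (∀ x : Euc N, ∀ t ∈ Set.Ioo (0:ℝ) T,
    deriv (fun s => u x s) t = lapl (fun y => u y t ^ m) x)

/-- Rescaled solution ũ(x,τ) = (T-t)^(-β) u(x (T-t)^γ, t), τ = -log(T-t). -/
def rescaleSol (N : ℕ) (m T : ℝ) (u : Euc N → ℝ → ℝ) (x : Euc N) (τ : ℝ) : ℝ :=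
  Real.exp (betaC N m * τ) * u (Real.exp (-gammaC N m * τ) • x) (T - Real.exp (-τ))

/-- f is radially symmetric. -/
def IsRadial {N : ℕ} (f : Euc N → ℝ) : Prop := ∀ x y : Euc N, ‖x‖ = ‖y‖ → f x = f y

/-! ### The Laplacian of a radial function -/

lemma hasDerivAt_line {N : ℕ} {W : Euc N → ℝ} (hW : ContDiff ℝ 2 W) (x w : Euc N) (s : ℝ) :
    HasDerivAt (fun s : ℝ => W (x + s • w)) (fderiv ℝ W (x + s • w) w) s := by
  have h1 : HasFDerivAt W (fderiv ℝ W (x + s • w)) (x + s • w) :=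
    (hW.differentiable (by norm_num) _).hasFDerivAt
  have h2 : HasDerivAt (fun s : ℝ => x + s • w) w s := by
    simpa using ((hasDerivAt_id s).smul_const w).const_add x
  exact h1.comp_hasDerivAt s h2

lemma iteratedFDeriv_two_eq_deriv_line {N : ℕ} {W : Euc N → ℝ} (hW : ContDiff ℝ 2 W)
    (x w : Euc N) :
    iteratedFDeriv ℝ 2 W x ![w, w] = deriv (deriv fun s : ℝ => W (x + s • w)) 0 := by
  have h0 : (deriv fun s : ℝ => W (x + s • w)) = fun s => fderiv ℝ W (x + s • w) w :=
    funext fun s => (hasDerivAt_line hW x w s).deriv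
  have h1 : ContDiff ℝ 1 (fderiv ℝ W) := hW.fderiv_right (by norm_num)
  have h2 : HasDerivAt (fun s : ℝ => x + s • w) w 0 := by
    simpa using ((hasDerivAt_id (0:ℝ)).smul_const w).const_add x
  have h3 : HasFDerivAt (fderiv ℝ W) (fderiv ℝ (fderiv ℝ W) x) (x + (0:ℝ) • w) := by
    simpa using (h1.differentiable (by norm_num) x).hasFDerivAt
  have h4 : HasDerivAt (fun s : ℝ => fderiv ℝ W (x + s • w)) (fderiv ℝ (fderiv ℝ W) x w) 0 :=
    h3.comp_hasDerivAt (0:ℝ) h2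
  have h5 : HasDerivAt (fun s : ℝ => fderiv ℝ W (x + s • w) w) (fderiv ℝ (fderiv ℝ W) x w w) 0 :=
    (ContinuousLinearMap.apply ℝ ℝ w).hasFDerivAt.comp_hasDerivAt (0:ℝ) h4
  rw [h0, iteratedFDeriv_two_apply]
  exact h5.deriv.symm

/-- The Laplacian in polar coordinates: for radial `W` with profile `g`, it is
`g'' + (N - 1) g' / r`. The transverse second derivatives are computed from
`W (r e₀ + s eᵢ) = g (√(r² + s²))`. -/
lemma lapl_radial {N : ℕ} {W : Euc N → ℝ} (hW : ContDiff ℝ 2 W) (hrad : IsRadial W)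
    (i₀ : Fin N) {r : ℝ} (hr : 0 < r) :
    lapl W (r • EuclideanSpace.single i₀ 1) =
      deriv (deriv fun s : ℝ => W (s • EuclideanSpace.single i₀ 1)) r
        + ((N : ℝ) - 1) / r * deriv (fun s : ℝ => W (s • EuclideanSpace.single i₀ 1)) r := by
  set e : Euc N := EuclideanSpace.single i₀ 1 with he
  set g : ℝ → ℝ := fun s => W (s • e) with hg
  have hgC : ContDiff ℝ 2 g := hW.comp (contDiff_id.smul contDiff_const)
  have hgd : ∀ s, DifferentiableAt ℝ g s := hgC.differentiable (by norm_num)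
  have hgC1 : ContDiff ℝ 1 (deriv g) := by
    have : ContDiff ℝ (1 + 1) g := by simpa [one_add_one_eq_two] using hgC
    exact ((contDiff_succ_iff_deriv).1 this).2.2
  have hterm : ∀ i : Fin N, iteratedFDeriv ℝ 2 W (r • e)
      ![EuclideanSpace.single i 1, EuclideanSpace.single i 1] =
      if i = i₀ then deriv (deriv g) r else deriv g r / r := by
    intro i
    rw [iteratedFDeriv_two_eq_deriv_line hW]
    split_ifs with hi
    · subst hi
      have : (fun s : ℝ => W (r • e + s • EuclideanSpace.single i 1)) = fun s => g (r + s) := by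
        funext s
        simp only [hg, add_smul, he]
      rw [this]
      have h2 : (deriv fun s => g (r + s)) = fun s => deriv g (r + s) := by
        funext s
        exact deriv_comp_const_add g r s
      rw [h2, deriv_comp_const_add (deriv g) r 0, add_zero]
    · have hpos : ∀ s : ℝ, 0 < r ^ 2 + s ^ 2 := fun s => by positivity
      have h1 : (fun s : ℝ => W (r • e + s • EuclideanSpace.single i 1)) =
          fun s => g (√(r ^ 2 + s ^ 2)) := by
        funext s
        apply hrad
        rw [norm_smul, he, PiLp.norm_single, norm_one, mul_one, Real.norm_eq_abs,
          abs_of_nonneg (Real.sqrt_nonneg _)]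
        have hin : inner ℝ (r • e) (s • (EuclideanSpace.single i (1:ℝ) : Euc N)) = 0 := by
          simp [he, inner_smul_left, inner_smul_right, EuclideanSpace.inner_single_left,
            Ne.symm hi]
        have := norm_add_sq_eq_norm_sq_add_norm_sq_of_inner_eq_zero _ _ hin
        rw [← he, eq_comm, Real.sqrt_eq_iff_mul_self_eq (hpos s).le (norm_nonneg _), this]
        simp [norm_smul, he]
        ring
      have hsq : ∀ s : ℝ, HasDerivAt (fun s : ℝ => √(r ^ 2 + s ^ 2)) (s / √(r ^ 2 + s ^ 2)) s := by
        intro s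
        have := ((hasDerivAt_pow 2 s).const_add (r ^ 2)).sqrt (hpos s).ne'
        convert this using 1
        have := Real.sqrt_pos.2 (hpos s)
        simp
        field_simp
      have h2 : (deriv fun s => g (√(r ^ 2 + s ^ 2))) =
          fun s => deriv g (√(r ^ 2 + s ^ 2)) * (s / √(r ^ 2 + s ^ 2)) := by
        funext s
        exact ((hgd _).hasDerivAt.comp s (hsq s)).deriv
      rw [h1, h2]
      have hs0 : √(r ^ 2 + 0 ^ 2) = r := by simp [Real.sqrt_sq hr.le]
      have ha := ((hgC1.differentiable (by norm_num) (√(r ^ 2 + 0 ^ 2))).hasDerivAt.comp 0 (hsq 0))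
      have hb := (hasDerivAt_id (0:ℝ)).div (hsq 0) (by rw [hs0]; exact hr.ne')
      have := (ha.mul hb).deriv
      refine Eq.trans this ?_
      simp [Real.sqrt_sq hr.le]
      field_simp
  unfold lapl
  rw [Finset.sum_congr rfl fun i _ => hterm i, Finset.sum_ite]
  simp only [Finset.sum_const, nsmul_eq_mul, Finset.filter_eq', Finset.mem_univ, if_true,
    Finset.card_singleton, Nat.cast_one, one_mul, Finset.filter_ne', Finset.card_erase_of_mem,
    Finset.card_univ, Fintype.card_fin]
  rw [Nat.cast_sub (by have := i₀.pos; omega)]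
  push_cast
  ring

/-! ### Decay of integrable radial functions with a one-sided Laplacian bound -/

/-- If the radial Laplacian of `g` is at most `C V`, then the flux `r ^ n g'(r)`, whose derivative
is `r ^ n` times that Laplacian and which vanishes at the origin, is bounded by `C` times the total
mass of `V` for the weight `r ^ n`. -/
lemma flux_le {n : ℕ} (hn : 1 ≤ n) {g V : ℝ → ℝ} {C : ℝ} (hC : 0 ≤ C) (hg : ContDiff ℝ 2 g)
    (hV : ∀ r, 0 < r → 0 < V r)
    (hint : IntegrableOn (fun y => y ^ n * V y) (Set.Ioi 0))
    (hode : ∀ r, 0 < r → deriv (deriv g) r + (n : ℝ) / r * deriv g r ≤ C * V r)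
    {r : ℝ} (hr : 0 < r) :
    r ^ n * deriv g r ≤ C * ∫ y in Set.Ioi 0, y ^ n * V y := by
  have hgC1 : ContDiff ℝ 1 (deriv g) := by
    have : ContDiff ℝ (1 + 1) g := by simpa [one_add_one_eq_two] using hg
    exact ((contDiff_succ_iff_deriv).1 this).2.2
  have hd : ∀ s, HasDerivAt (fun s => s ^ n * deriv g s)
      ((n : ℝ) * s ^ (n - 1) * deriv g s + s ^ n * deriv (deriv g) s) s := fun s =>
    (hasDerivAt_pow n s).mul (hgC1.differentiable (by norm_num) s).hasDerivAt
  have hint' : IntegrableOn (fun y => C * (y ^ n * V y)) (Set.Icc 0 r) := by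
    rw [integrableOn_Icc_iff_integrableOn_Ioc]
    exact (hint.mono_set Set.Ioc_subset_Ioi_self).const_mul C
  have key := intervalIntegral.sub_le_integral_of_hasDeriv_right_of_le hr.le
    (fun s _ => (hd s).continuousAt.continuousWithinAt)
    (fun s _ => (hd s).hasDerivWithinAt) hint' (by
      intro s hs
      have hs0 : 0 < s := hs.1
      have h1 := mul_le_mul_of_nonneg_left (hode s hs0) (pow_pos hs0 n).le
      have h2 : s ^ n = s ^ (n - 1) * s := by
        rw [← pow_succ]; congr 1; omega
      calc (n : ℝ) * s ^ (n - 1) * deriv g s + s ^ n * deriv (deriv g) s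
          = s ^ n * (deriv (deriv g) s + n / s * deriv g s) := by
            rw [h2]; field_simp; ring
        _ ≤ s ^ n * (C * V s) := h1
        _ = C * (s ^ n * V s) := by ring)
  rw [zero_pow (by omega), zero_mul, sub_zero, intervalIntegral.integral_of_le hr.le,
    integral_const_mul] at key
  refine key.trans (mul_le_mul_of_nonneg_left ?_ hC)
  refine setIntegral_mono_set hint ?_ (Filter.Eventually.of_forall Set.Ioc_subset_Ioi_self)
  filter_upwards [self_mem_ae_restrict measurableSet_Ioi] with y hy
  have := hV y hy
  have : (0:ℝ) < y := hy
  positivity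

/-- The one-dimensional core. The flux bound keeps `V ^ m` from growing by more than a multiple of
`R ^ (1 - n)` on `[R / 2, R]`; since `q m < n - 1`, a value `V R ≥ ε R ^ (-q)` then persists, up to
a factor, on all of `[R / 2, R]`, and since `q < n + 1` this costs unbounded mass. -/
lemma tendsto_profile {n : ℕ} (hn : 1 ≤ n) {m q C : ℝ} (hm : 0 < m)
    (hqm : q * m < n - 1) (hqn : q < n + 1) {V : ℝ → ℝ} (hC : 0 ≤ C)
    (hg : ContDiff ℝ 2 fun r => V r ^ m) (hV : ∀ r, 0 < r → 0 < V r)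
    (hint : IntegrableOn (fun y => y ^ n * V y) (Set.Ioi 0))
    (hode : ∀ r, 0 < r → deriv (deriv fun r => V r ^ m) r
      + (n : ℝ) / r * deriv (fun r => V r ^ m) r ≤ C * V r) :
    Tendsto (fun R => R ^ q * V R) atTop (𝓝 0) := by
  set g : ℝ → ℝ := fun r => V r ^ m with hgdef
  set I := ∫ y in Set.Ioi 0, y ^ n * V y with hI
  have hpos : ∀ y ∈ Set.Ioi (0:ℝ), 0 ≤ y ^ n * V y := fun y hy => by
    have := hV y hy
    have : (0:ℝ) < y := hy
    positivity
  have hI0 : 0 ≤ I := setIntegral_nonneg measurableSet_Ioi hpos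
  have hK0 : 0 ≤ C * I := mul_nonneg hC hI0
  have hgrow : ∀ R, 0 < R → ∀ r ∈ Set.Icc (R / 2) R, g R - g r ≤ C * I * 2 ^ n * (R / R ^ n) := by
    intro R hR r hr
    have hr0 : 0 < r := by linarith [hr.1]
    have h := Convex.image_sub_le_mul_sub_of_deriv_le (convex_Icc (R / 2) R)
      hg.continuous.continuousOn (hg.differentiable (by norm_num)).differentiableOn
      (C := C * I / (R / 2) ^ n) (by
        intro s hs
        rw [interior_Icc] at hs
        have hs0 : 0 < s := by linarith [hs.1]
        have h1 := flux_le hn hC hg hV hint hode hs0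
        calc deriv g s ≤ C * I / s ^ n := by
              rw [le_div_iff₀ (pow_pos hs0 n)]; linarith
          _ ≤ C * I / (R / 2) ^ n := by
              gcongr
              exact hs.1.le) r hr R ⟨by linarith, le_rfl⟩ hr.2
    calc g R - g r ≤ C * I / (R / 2) ^ n * (R - r) := h
      _ ≤ C * I / (R / 2) ^ n * R := by gcongr; linarith
      _ = C * I * 2 ^ n * (R / R ^ n) := by
        rw [div_pow]; field_simp
  rw [Metric.tendsto_atTop']
  intro ε hε
  set c : ℝ := (1 / 2 : ℝ) ^ (1 / m) * ε with hc
  have hc0 : 0 < c := by positivity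
  have hlim1 : Tendsto (fun R : ℝ => C * I * 2 ^ n * R ^ (-((n : ℝ) - 1 - q * m))) atTop (𝓝 0) := by
    simpa using (tendsto_rpow_neg_atTop (sub_pos.2 hqm)).const_mul (C * I * 2 ^ n)
  have hlim2 : Tendsto (fun R : ℝ => c / 2 ^ (n + 1) * R ^ ((n : ℝ) + 1 - q)) atTop atTop :=
    (tendsto_rpow_atTop (sub_pos.2 hqn)).const_mul_atTop (by positivity)
  obtain ⟨R₀, hR₀⟩ := eventually_atTop.1
    (((hlim1.eventually_lt_const (show 0 < 1 / 2 * ε ^ m by positivity)).and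
      (hlim2.eventually_gt_atTop I)).and (eventually_gt_atTop 0))
  refine ⟨R₀, fun R hRR => ?_⟩
  obtain ⟨⟨h1, h2⟩, hR⟩ := hR₀ R hRR.le
  have hVR := hV R hR
  rw [Real.dist_eq, sub_zero, abs_of_pos (by positivity)]
  by_contra! hcon
  have hVR' : ε * R ^ (-q) ≤ V R := by
    rw [rpow_neg hR.le, ← div_eq_mul_inv, div_le_iff₀ (by positivity)]; linarith
  have hgR : ε ^ m * R ^ (-(q * m)) ≤ g R := by
    have := rpow_le_rpow (by positivity) hVR' hm.le
    rwa [mul_rpow hε.le (by positivity), ← rpow_mul hR.le, neg_mul] at this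
  have hsmall : C * I * 2 ^ n * (R / R ^ n) ≤ 1 / 2 * ε ^ m * R ^ (-(q * m)) := by
    have : R / R ^ n = R ^ (-((n : ℝ) - 1 - q * m)) * R ^ (-(q * m)) := by
      rw [← rpow_add hR, ← rpow_natCast R n]
      nth_rw 1 [← rpow_one R]
      rw [← rpow_sub hR]
      congr 1; ring
    rw [this, ← mul_assoc]
    gcongr
  have hVlow : ∀ r ∈ Set.Icc (R / 2) R, c * R ^ (-q) ≤ V r := by
    intro r hr
    have hr0 : 0 < r := by linarith [hr.1]
    have h3 : (c * R ^ (-q)) ^ m ≤ V r ^ m := by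
      have h4 := hgrow R hR r hr
      have h5 : (c * R ^ (-q)) ^ m = 1 / 2 * ε ^ m * R ^ (-(q * m)) := by
        rw [hc, mul_rpow (by positivity) (by positivity), mul_rpow (by positivity) (by positivity),
          ← rpow_mul hR.le, ← rpow_mul (by norm_num), one_div_mul_cancel hm.ne', rpow_one, neg_mul]
      rw [h5]
      change _ ≤ g r
      linarith
    exact (rpow_le_rpow_iff (by positivity) (hV r hr0).le hm).1 h3
  have hsub : Set.Ioc (R / 2) R ⊆ Set.Ioi 0 := fun r hr => by
    have := hr.1
    simp only [Set.mem_Ioi]; linarith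
  have hmass : (R / 2) * ((R / 2) ^ n * (c * R ^ (-q))) ≤ I := by
    calc (R / 2) * ((R / 2) ^ n * (c * R ^ (-q)))
        = ∫ _ in Set.Ioc (R / 2) R, (R / 2) ^ n * (c * R ^ (-q)) := by
          rw [setIntegral_const, Real.volume_real_Ioc_of_le (by linarith), smul_eq_mul]; ring
      _ ≤ ∫ y in Set.Ioc (R / 2) R, y ^ n * V y := by
          refine setIntegral_mono_on (integrableOn_const (by simp)) (hint.mono_set hsub)
            measurableSet_Ioc fun y hy => ?_
          have := hVlow y ⟨hy.1.le, hy.2⟩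
          have := hy.1.le
          have : 0 < y := hsub hy
          gcongr
      _ ≤ I := setIntegral_mono_set hint
          ((ae_restrict_iff' measurableSet_Ioi).2 (Filter.Eventually.of_forall hpos))
          (Filter.Eventually.of_forall hsub)
  have heq : (R / 2) * ((R / 2) ^ n * (c * R ^ (-q))) = c / 2 ^ (n + 1) * R ^ ((n : ℝ) + 1 - q) := by
    rw [sub_eq_add_neg, rpow_add hR, rpow_add hR, rpow_one, rpow_natCast, div_pow, pow_succ]
    field_simp
  linarith

/-- Decay of a radial integrable `v > 0` with `Δ (v ^ m) ≤ C v`. -/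
lemma tendsto_of_lapl_le {N : ℕ} (hN : 3 ≤ N) {m q C : ℝ} (hm : 0 < m)
    (hqm : q * m < N - 2) (hqN : q < N) (hC : 0 ≤ C) {v : Euc N → ℝ}
    (hv : ContDiff ℝ 2 v) (hpos : ∀ x, 0 < v x) (hrad : IsRadial v) (hint : Integrable v)
    (hlap : ∀ x, lapl (fun y => v y ^ m) x ≤ C * v x) :
    Tendsto (fun x : Euc N => ‖x‖ ^ q * v x) (cocompact (Euc N)) (𝓝 0) := by
  have hne : Nonempty (Fin N) := ⟨⟨0, by omega⟩⟩
  obtain ⟨i₀⟩ := hne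
  have hnt : Nontrivial (Euc N) :=
    Module.nontrivial_of_finrank_pos (R := ℝ) (by rw [finrank_euclideanSpace_fin]; omega)
  set e : Euc N := EuclideanSpace.single i₀ 1 with he
  set V : ℝ → ℝ := fun r => v (r • e) with hVdef
  have hvV : ∀ x, v x = V ‖x‖ := fun x => hrad _ _ (by simp [he, norm_smul])
  have hW : ContDiff ℝ 2 fun y => v y ^ m := hv.rpow_const_of_ne fun x => (hpos x).ne'
  have hWrad : IsRadial fun y => v y ^ m := fun x y hxy => by simp only [hrad x y hxy]
  have hNc : ((N - 1 : ℕ) : ℝ) = N - 1 := by rw [Nat.cast_sub (by omega)]; simp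
  have hintV : IntegrableOn (fun y => y ^ (N - 1) * V y) (Set.Ioi 0) := by
    have h : Integrable (fun x : Euc N => V ‖x‖) := by
      simpa only [← hvV] using hint
    rw [integrable_fun_norm_addHaar volume, finrank_euclideanSpace_fin] at h
    simpa only [smul_eq_mul] using h
  have key := tendsto_profile (n := N - 1) (by omega) (m := m) (q := q) (C := C) hm
    (by rw [hNc]; linarith) (by rw [hNc]; linarith) (V := V) hC
    (hW.comp (contDiff_id.smul contDiff_const)) (fun r _ => hpos _) hintV (by
      intro r hr
      have := hlap (r • e)
      rw [lapl_radial hW hWrad i₀ hr] at this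
      rw [hNc]
      exact this)
  have := key.comp (tendsto_norm_cocompact_atTop (E := Euc N))
  refine this.congr fun x => ?_
  simp only [Function.comp, hvV x]

/-! ### The time slice at extinction -/

/-- At `x ≠ 0` the Barenblatt solution vanishes as `t` increases to the extinction time; the base
is squeezed between `0` and `C* (T - t) / |x|²`. -/
lemma tendsto_Bb {N : ℕ} {m T k : ℝ} (hC : 0 ≤ Cst N m) (hm : m < 1) (hk : 0 < k)
    {x : Euc N} (hx : x ≠ 0) :
    Tendsto (fun t => Bb N m T k x t) (𝓝[<] T) (𝓝 0) := by
  have hx2 : 0 < ‖x‖ ^ 2 := by positivity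
  have hp : 0 < 1 / (1 - m) := by
    have : 0 < 1 - m := by linarith
    positivity
  have h1 : Tendsto (fun t => Cst N m * (T - t) / ‖x‖ ^ 2) (𝓝[<] T) (𝓝 0) := by
    have : Continuous fun t : ℝ => Cst N m * (T - t) / ‖x‖ ^ 2 := by fun_prop
    have := (this.tendsto T).mono_left (nhdsWithin_le_nhds (s := Set.Iio T))
    simpa using this
  have h2 : Tendsto (fun t => Cst N m * (T - t) /
      (k * (T - t) ^ (2 * gammaC N m) + ‖x‖ ^ 2)) (𝓝[<] T) (𝓝 0) := by
    refine squeeze_zero' ?_ ?_ h1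
    · filter_upwards [self_mem_nhdsWithin] with t (ht : t < T)
      have : 0 < T - t := by linarith
      positivity
    · filter_upwards [self_mem_nhdsWithin] with t (ht : t < T)
      have h0 : 0 < T - t := by linarith
      have : 0 ≤ k * (T - t) ^ (2 * gammaC N m) := by positivity
      gcongr
      linarith
  have := h2.rpow_const (p := 1 / (1 - m)) (Or.inr hp.le)
  rwa [zero_rpow hp.ne'] at this

/-- The Barenblatt solution dies off exactly at its extinction time T: for a
solution u as in the construction (living past T, u₀ - B(·,0) = f ∈ L¹ nonnegative radial,
radially symmetric, u ≥ B up to T, L¹-contraction, Aronson–Bénilan inequality), there is no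
A > 0 and sequence |xᵢ| → ∞ with u(xᵢ,T) ≥ A/|xᵢ|^{2/(1-m)}; that is,
|x|^{2/(1-m)} u(x,T) → 0 as |x| → ∞. -/
theorem barenblatt_dies_at_T (N : ℕ) (hN : 3 ≤ N) (m T Ts k : ℝ)
    (hm0 : 0 < m) (hm1 : m < ((N : ℝ) - 2) / N)
    (hT : 0 < T) (hTs : T < Ts) (hk : 0 < k)
    (u : Euc N → ℝ → ℝ) (f : Euc N → ℝ)
    (hf : Integrable f volume) (hfpos : ∀ x, 0 ≤ f x) (hfrad : IsRadial f)
    (hsol : IsFDESol N m Ts u (fun x => Bb N m T k x 0 + f x))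
    (hurad : ∀ t ∈ Set.Ioo (0:ℝ) Ts, IsRadial (fun x => u x t))
    (hlow : ∀ x : Euc N, ∀ t ∈ Set.Ioo (0:ℝ) T, Bb N m T k x t ≤ u x t)
    (hcontr : ∀ t ∈ Set.Ioo (0:ℝ) T,
      (∫⁻ x, ENNReal.ofReal |u x t - Bb N m T k x t|) ≤ ENNReal.ofReal (∫ x, f x))
    (hAB : ∀ x : Euc N, ∀ t ∈ Set.Ioo (0:ℝ) Ts,
      deriv (fun s => u x s) t ≤ u x t / ((1 - m) * t)) :
    (¬ ∃ A : ℝ, 0 < A ∧ ∃ xs : ℕ → Euc N,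
      Tendsto (fun i => ‖xs i‖) atTop atTop ∧
      ∀ i, A / ‖xs i‖ ^ (2 / (1 - m)) ≤ u (xs i) T) ∧
    Tendsto (fun x : Euc N => ‖x‖ ^ (2 / (1 - m)) * u x T) (cocompact (Euc N)) (nhds 0) := by
  obtain ⟨hpos, hsmooth, -, -, heq⟩ := hsol
  have hNr : (3:ℝ) ≤ N := by exact_mod_cast hN
  have hmN : m * N < N - 2 := by rwa [lt_div_iff₀ (by linarith)] at hm1
  have hm : m < 1 := by nlinarith
  have h1m : 0 < 1 - m := by linarith
  have hTmem : T ∈ Set.Ioo 0 Ts := ⟨hT, hTs⟩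
  have hopen : IsOpen ((Set.univ : Set (Euc N)) ×ˢ Set.Ioo (0:ℝ) Ts) :=
    isOpen_univ.prod isOpen_Ioo
  have hat : ∀ x : Euc N, ∀ t ∈ Set.Ioo (0:ℝ) Ts,
      ContDiffAt ℝ (⊤ : ℕ∞) (fun p : Euc N × ℝ => u p.1 p.2) (x, t) := fun x t ht =>
    hsmooth.contDiffAt (hopen.mem_nhds ⟨Set.mem_univ _, ht⟩)
  have hspace : ∀ t ∈ Set.Ioo (0:ℝ) Ts, ContDiff ℝ 2 fun x => u x t := fun t ht =>
    contDiff_iff_contDiffAt.2 fun x =>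
      ContDiffAt.comp (f := fun y : Euc N => (y, t)) x
        ((hat x t ht).of_le (WithTop.coe_le_coe.2 (le_top : (2 : ℕ∞) ≤ ⊤)))
        (contDiffAt_id.prodMk contDiffAt_const)
  have htime : ∀ x : Euc N, Tendsto (fun t => u x t) (𝓝[<] T) (𝓝 (u x T)) := fun x => by
    have : ContinuousAt (fun t : ℝ => u x t) T :=
      ContinuousAt.comp (f := fun t : ℝ => (x, t)) (hat x T hTmem).continuousAt (by fun_prop)
    exact this.tendsto.mono_left nhdsWithin_le_nhds
  have hCst : 0 ≤ Cst N m := by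
    unfold Cst
    have : 0 < (N : ℝ) - 2 - m * N := by linarith
    positivity
  -- Fatou's lemma transfers the `L¹` bound on `u - B` to time `T`, where `B` is zero.
  have hbound : (∫⁻ x, ENNReal.ofReal (u x T)) ≤ ENNReal.ofReal (∫ x, f x) := by
    have hnz : ∀ᵐ x : Euc N, x ≠ 0 := by
      have hnt : Nontrivial (Euc N) :=
        Module.nontrivial_of_finrank_pos (R := ℝ) (by rw [finrank_euclideanSpace_fin]; omega)
      exact Measure.ae_ne volume 0
    obtain ⟨s, -, hsT, hslim⟩ := exists_seq_strictMono_tendsto' hT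
    have hslim' : Tendsto s atTop (𝓝[<] T) :=
      tendsto_nhdsWithin_iff.2 ⟨hslim, Filter.Eventually.of_forall fun i => (hsT i).2⟩
    have hmeas : ∀ i, Measurable fun x => ENNReal.ofReal |u x (s i) - Bb N m T k x (s i)| := by
      intro i
      have h1 : Measurable fun x => u x (s i) :=
        (hspace _ ⟨(hsT i).1, (hsT i).2.trans hTs⟩).continuous.measurable
      have h2 : Measurable fun x => Bb N m T k x (s i) := by
        unfold Bb
        fun_prop
      exact ((h1.sub h2).abs).ennreal_ofReal
    calc (∫⁻ x, ENNReal.ofReal (u x T))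
        = ∫⁻ x, liminf (fun i => ENNReal.ofReal |u x (s i) - Bb N m T k x (s i)|) atTop := by
          refine lintegral_congr_ae ?_
          filter_upwards [hnz] with x hx
          have h := (((htime x).sub (tendsto_Bb (T := T) hCst hm hk hx)).abs).comp hslim'
          rw [sub_zero, abs_of_pos (hpos x T hTmem)] at h
          exact ((ENNReal.tendsto_ofReal h).liminf_eq).symm
      _ ≤ liminf (fun i => ∫⁻ x, ENNReal.ofReal |u x (s i) - Bb N m T k x (s i)|) atTop :=
          lintegral_liminf_le hmeas
      _ ≤ liminf (fun _ : ℕ => ENNReal.ofReal (∫ x, f x)) atTop :=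
          liminf_le_liminf (Filter.Eventually.of_forall fun i => hcontr _ (hsT i))
      _ = ENNReal.ofReal (∫ x, f x) := by simp
  have hint : Integrable fun x => u x T :=
    ⟨(hspace T hTmem).continuous.aestronglyMeasurable, by
      rw [hasFiniteIntegral_iff_ofReal (Filter.Eventually.of_forall fun x => (hpos x T hTmem).le)]
      exact hbound.trans_lt ENNReal.ofReal_lt_top⟩
  have hlim : Tendsto (fun x : Euc N => ‖x‖ ^ (2 / (1 - m)) * u x T) (cocompact (Euc N))
      (nhds 0) := by
    refine tendsto_of_lapl_le (C := 1 / ((1 - m) * T)) hN hm0 ?_ ?_ (by positivity) (hspace T hTmem)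
      (fun x => hpos x T hTmem) (hurad T hTmem) hint fun x => ?_
    · rw [div_mul_eq_mul_div, div_lt_iff₀ h1m]; linarith
    · rw [div_lt_iff₀ h1m]; linarith
    · rw [← heq x T hTmem, one_div_mul_eq_div]
      exact hAB x T hTmem
  refine ⟨?_, hlim⟩
  rintro ⟨A, hA, xs, hxs, hle⟩
  have hseq := hlim.comp (Metric.cobounded_eq_cocompact (α := Euc N) ▸
    tendsto_norm_atTop_iff_cobounded.1 hxs)
  obtain ⟨i, hi, hi0⟩ := ((hseq.eventually_lt_const hA).and (hxs.eventually_gt_atTop 0)).exists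
  have h := hle i
  rw [div_le_iff₀ (by positivity)] at h
  simp only [Function.comp] at hi
  linarith
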